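/- (Addition theorem for r(A) for line arrangements.) Let A' be a line arrangement in P^2 and let H be a line not in A', with A = A' ∪ {H} essential. Set r' = r(A'). If the number of intersection points of A lying on H is at least r' + 2, then r(A) = r' + 1. -/

import Mathlib

open Classical MvPolynomial

variable {K : Type*} [Field K] [CharZero K] {ℓ : ℕ}

/-- A (central) hyperplane arrangement: a finite set of nonzero linear forms,
pairwise non-proportional. -/
def IsArrangement (A : Finset (MvPolynomial (Fin ℓ) K)) : Prop :=
  (∀ α ∈ A, α ≠ 0 ∧ α.IsHomogeneous 1) ∧
    ∀ α ∈ A, ∀ β ∈ A, α ≠ β → ∀ c : K, α ≠ c • β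

/-- The arrangement is essential: the common zero set of its forms is `{0}`. -/
def IsEssential (A : Finset (MvPolynomial (Fin ℓ) K)) : Prop :=
  ∀ v : Fin ℓ → K, (∀ α ∈ A, eval v α = 0) → v = 0

/-- The defining polynomial `Q(A)`. -/
noncomputable def Qpoly (A : Finset (MvPolynomial (Fin ℓ) K)) : MvPolynomial (Fin ℓ) K :=
  ∏ α ∈ A, α

/-- Apply a derivation `θ = Σ θ_j ∂_j` to a polynomial. -/
noncomputable def applyDer (θ : Fin ℓ → MvPolynomial (Fin ℓ) K)
    (f : MvPolynomial (Fin ℓ) K) : MvPolynomial (Fin ℓ) K :=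
  ∑ j, θ j * pderiv j f

/-- The minimal degree of a Jacobian relation `r(A)`. -/
noncomputable def mdr (A : Finset (MvPolynomial (Fin ℓ) K)) : ℕ :=
  sInf {r | ∃ θ : Fin ℓ → MvPolynomial (Fin ℓ) K, θ ≠ 0 ∧
    (∀ j, (θ j).IsHomogeneous r) ∧ applyDer θ (Qpoly A) = 0}

/-- The number of elements `|A^H|` of the restriction of `A` to `H`:
the number of distinct subspaces `H ∩ ker α_L`, `L ∈ A \ {H}`. -/
noncomputable def restCard (A : Finset (MvPolynomial (Fin ℓ) K))
    (H : MvPolynomial (Fin ℓ) K) : ℕ :=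
  ((A.erase H).image fun L => {v : Fin ℓ → K | eval v H = 0 ∧ eval v L = 0}).card

/-!
Subtracting a multiple of the Euler derivation `E = ∑ j, x_j ∂_j` shows that `r(A)` is the least
degree of a homogeneous logarithmic derivation of `A` which is not a multiple of `E`. Multiplying
such a derivation of `A'` by `H` gives `r(A) ≤ r(A') + 1`. Conversely, suppose `θ` realises
`r = r(A) ≤ r(A')`. On the plane `H = 0` the determinant of `E` and `θ` has degree `r + 1` and is
divisible by `|A^H| ≥ r + 2` pairwise coprime linear forms, so it vanishes; hence `θ = p E + H η`,
where `η` is logarithmic for `A'`, of degree `r - 1 < r(A')`, and not a multiple of `E`, which is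
absurd.
-/

section Homogeneous

variable {σ : Type*}

section Semiring

variable {R : Type*} [CommSemiring R] {P Q : MvPolynomial σ R} {m n : ℕ}

theorem homogeneousComponent_add_mul (hP : P.IsHomogeneous m) (Q : MvPolynomial σ R) (n : ℕ) :
    homogeneousComponent (m + n) (P * Q) = P * homogeneousComponent n Q := by
  let := MvPolynomial.gradedAlgebra (σ := σ) (R := R)
  have h := DirectSum.coe_decompose_mul_add_of_left_mem (homogeneousSubmodule σ R)
    (b := Q) (j := n) hP
  rwa [← decomposition.decompose'_apply, ← decomposition.decompose'_apply]

theorem isHomogeneous_of_mul [NoZeroDivisors R] (hP0 : P ≠ 0) (hP : P.IsHomogeneous m)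
    (hPQ : (P * Q).IsHomogeneous (m + n)) : Q.IsHomogeneous n := by
  intro d hd
  change Finsupp.weight (fun _ => 1) d = n
  rw [← Finsupp.degree_eq_weight_one]
  by_contra hne
  have hcomp : P * homogeneousComponent d.degree Q = 0 := by
    rw [← homogeneousComponent_add_mul hP, homogeneousComponent_of_mem hPQ, if_neg (by omega)]
  have hcoeff := coeff_homogeneousComponent d.degree Q d
  rw [(mul_eq_zero.mp hcomp).resolve_left hP0, coeff_zero, if_pos rfl] at hcoeff
  exact hd hcoeff.symm

theorem exists_eq_C_of_isHomogeneous_zero (hP : P.IsHomogeneous 0) : ∃ c, P = C c :=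
  ⟨_, totalDegree_eq_zero_iff_eq_C.mp (Nat.le_zero.mp hP.totalDegree_le)⟩

theorem exists_eq_smul_of_dvd [NoZeroDivisors R] (hP0 : P ≠ 0) (hP : P.IsHomogeneous m)
    (hQ : Q.IsHomogeneous m) (h : P ∣ Q) : ∃ c : R, Q = c • P := by
  obtain ⟨g, rfl⟩ := h
  obtain ⟨c, rfl⟩ := exists_eq_C_of_isHomogeneous_zero (isHomogeneous_of_mul (n := 0) hP0 hP hQ)
  exact ⟨c, by rw [smul_eq_C_mul, mul_comm]⟩

end Semiring

variable {F : Type*} [Field F] {L P : MvPolynomial σ F}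

theorem prime_of_isHomogeneous_one (hL0 : L ≠ 0) (hL : L.IsHomogeneous 1) : Prime L := by
  refine (irreducible_of_totalDegree_eq_one (hL.totalDegree hL0) fun c hc => ?_).prime
  refine (isUnit_iff_ne_zero).mpr fun hc0 => hL0 ?_
  ext d
  simpa [hc0] using hc d

theorem card_le_of_pairwise_isRelPrime_of_dvd {ι : Type*} {s : Finset ι}
    {f : ι → MvPolynomial σ F} {d : ℕ} (hf : ∀ i ∈ s, (f i).IsHomogeneous 1)
    (hrel : (s : Set ι).Pairwise fun i j => IsRelPrime (f i) (f j)) (hdvd : ∀ i ∈ s, f i ∣ P)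
    (hP0 : P ≠ 0) (hP : P.IsHomogeneous d) : s.card ≤ d := by
  have hprod : (∏ i ∈ s, f i).IsHomogeneous s.card := by
    simpa using IsHomogeneous.prod s f (fun _ => 1) hf
  obtain ⟨g, rfl⟩ := Finset.prod_dvd_of_isRelPrime hrel hdvd
  rw [← hP.totalDegree hP0, totalDegree_mul_of_isDomain (left_ne_zero_of_mul hP0)
    (right_ne_zero_of_mul hP0), hprod.totalDegree (left_ne_zero_of_mul hP0)]
  exact Nat.le_add_right _ _

/-- Exactness of the Koszul complex of the variables in degree one. -/
theorem exists_eq_smul_X_of_X_mul_eq [Nontrivial σ] {ψ : σ → MvPolynomial σ F}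
    (h : ∀ j k, X j * ψ k = X k * ψ j) : ∃ p : MvPolynomial σ F, ψ = p • X := by
  obtain ⟨i, k, hik⟩ := exists_pair_ne σ
  have hdvd : X i ∣ ψ i :=
    ((X_prime (i := i)).dvd_or_dvd (Dvd.intro _ (h i k))).resolve_left
      fun hX => hik (X_dvd_X.mp hX)
  obtain ⟨p, hp⟩ := hdvd
  refine ⟨p, funext fun j => mul_left_cancel₀ (X_ne_zero i) ?_⟩
  rw [h i j, hp, Pi.smul_apply, smul_eq_mul]
  ring

theorem exists_eq_smul_X_of_smul_eq [Nontrivial σ] {ψ : σ → MvPolynomial σ F}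
    {p : MvPolynomial σ F} (hP0 : P ≠ 0) (h : P • ψ = p • X) :
    ∃ q : MvPolynomial σ F, ψ = q • X := by
  refine exists_eq_smul_X_of_X_mul_eq fun j k => mul_left_cancel₀ hP0 ?_
  have hj : P * ψ j = p * X j := congrFun h j
  have hk : P * ψ k = p * X k := congrFun h k
  linear_combination X j * hk - X k * hj

end Homogeneous

section LinearForm

variable {σ R : Type*} [Fintype σ] [CommSemiring R]

/-- The linear form with coefficient vector `a`. -/
noncomputable def linearForm (a : σ → R) : MvPolynomial σ R :=
  ∑ j, C (a j) * X j

theorem isHomogeneous_linearForm (a : σ → R) : (linearForm a).IsHomogeneous 1 :=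
  IsHomogeneous.sum _ _ _ fun j _ => isHomogeneous_C_mul_X (a j) j

theorem exists_eq_linearForm {L : MvPolynomial σ R} (hL : L.IsHomogeneous 1) :
    ∃ a, L = linearForm a := by
  rw [← mem_homogeneousSubmodule, homogeneousSubmodule_one_eq_span_X,
    Submodule.mem_span_range_iff_exists_fun] at hL
  obtain ⟨a, rfl⟩ := hL
  exact ⟨a, by simp only [linearForm, smul_eq_C_mul]⟩

theorem exists_ne_zero_of_linearForm_ne_zero {a : σ → R} (ha : linearForm a ≠ 0) :
    ∃ i, a i ≠ 0 := by
  contrapose! ha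
  simp [linearForm, ha]

end LinearForm

section HyperplaneRestriction

variable {F : Type*} [Field F] {n : ℕ} (a : Fin (n + 1) → F) (i : Fin (n + 1))

/-- Restriction of polynomials to the hyperplane `∑ j, a j * x j = 0`, on which the coordinates
other than `x i` serve as coordinates; it is meaningful only for `a i ≠ 0`. -/
noncomputable def hyperplaneRestriction :
    MvPolynomial (Fin (n + 1)) F →ₐ[F] MvPolynomial (Fin n) F :=
  aeval (i.insertNth (-(C (a i)⁻¹ * linearForm (i.removeNth a))) X)

theorem hyperplaneRestriction_X_self :
    hyperplaneRestriction a i (X i) = -(C (a i)⁻¹ * linearForm (i.removeNth a)) := by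
  simp [hyperplaneRestriction]

theorem hyperplaneRestriction_X_succAbove (j : Fin n) :
    hyperplaneRestriction a i (X (i.succAbove j)) = X j := by
  simp [hyperplaneRestriction]

theorem hyperplaneRestriction_rename (q : MvPolynomial (Fin n) F) :
    hyperplaneRestriction a i (rename i.succAbove q) = q := by
  rw [hyperplaneRestriction, aeval_rename, Fin.insertNth_comp_succAbove, aeval_X_left_apply]

theorem linearForm_eq_add_rename :
    linearForm a = C (a i) * X i + rename i.succAbove (linearForm (i.removeNth a)) := by
  simp [linearForm, Fin.sum_univ_succAbove _ i, Fin.removeNth]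

variable {a i}

theorem isHomogeneous_hyperplaneRestriction {P : MvPolynomial (Fin (n + 1)) F} {d : ℕ}
    (hP : P.IsHomogeneous d) : (hyperplaneRestriction a i P).IsHomogeneous d := by
  have hX (k : Fin (n + 1)) : (hyperplaneRestriction a i (X k)).IsHomogeneous 1 := by
    induction k using i.succAboveCases with
    | x =>
      rw [hyperplaneRestriction_X_self]
      exact ((isHomogeneous_linearForm _).C_mul _).neg
    | p j =>
      rw [hyperplaneRestriction_X_succAbove]
      exact isHomogeneous_X F j
  rw [aeval_unique (hyperplaneRestriction a i), ← one_mul d]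
  exact hP.aeval _ hX

theorem hyperplaneRestriction_linearForm (ha : a i ≠ 0) :
    hyperplaneRestriction a i (linearForm a) = 0 := by
  rw [linearForm_eq_add_rename a i, map_add, map_mul, hyperplaneRestriction_X_self,
    hyperplaneRestriction_rename, ← algebraMap_eq, AlgHom.commutes, algebraMap_eq, mul_neg,
    ← mul_assoc, ← C_mul, mul_inv_cancel₀ ha, C_1, one_mul, neg_add_cancel]

theorem linearForm_dvd_sub_rename_hyperplaneRestriction (ha : a i ≠ 0)
    (P : MvPolynomial (Fin (n + 1)) F) :
    linearForm a ∣ P - rename i.succAbove (hyperplaneRestriction a i P) := by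
  let π := Ideal.Quotient.mkₐ F (Ideal.span {linearForm a})
  suffices h : (π.comp (rename i.succAbove)).comp (hyperplaneRestriction a i) = π by
    rw [← Ideal.mem_span_singleton, ← Ideal.Quotient.eq]
    exact (DFunLike.congr_fun h P).symm
  refine algHom_ext fun k => Eq.symm ?_
  refine Ideal.Quotient.eq.mpr (Ideal.mem_span_singleton.mpr ?_)
  induction k using i.succAboveCases with
  | x =>
    refine Dvd.intro_left (C (a i)⁻¹) ?_
    have hC : (C (a i)⁻¹ * C (a i) : MvPolynomial (Fin (n + 1)) F) = 1 := by
      rw [← C_mul, inv_mul_cancel₀ ha, C_1]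
    simp only [RingHom.coe_coe, hyperplaneRestriction_X_self, map_neg, map_mul, rename_C]
    linear_combination C (a i)⁻¹ * linearForm_eq_add_rename a i + X i * hC
  | p j => simp [hyperplaneRestriction_X_succAbove]

theorem hyperplaneRestriction_eq_zero_iff (ha : a i ≠ 0) {P : MvPolynomial (Fin (n + 1)) F} :
    hyperplaneRestriction a i P = 0 ↔ linearForm a ∣ P := by
  refine ⟨fun hP => ?_, ?_⟩
  · simpa [hP] using linearForm_dvd_sub_rename_hyperplaneRestriction ha P
  · rintro ⟨Q, rfl⟩
    rw [map_mul, hyperplaneRestriction_linearForm ha, zero_mul]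

end HyperplaneRestriction

section Derivation

variable {F : Type*} [Field F] {ℓ : ℕ}
  {θ η : Fin ℓ → MvPolynomial (Fin ℓ) F} {f g p : MvPolynomial (Fin ℓ) F}

theorem applyDer_eq_mkDerivation (θ : Fin ℓ → MvPolynomial (Fin ℓ) F)
    (f : MvPolynomial (Fin ℓ) F) : applyDer θ f = mkDerivation F θ f := by
  have h : mkDerivation F θ = ∑ j, θ j • pderiv j := derivation_ext fun i => by
    rw [mkDerivation_X, ← Derivation.coeFnAddMonoidHom_apply, map_sum, Finset.sum_apply]
    simp [pderiv_X, Pi.single_apply]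
  rw [h, ← Derivation.coeFnAddMonoidHom_apply, map_sum, Finset.sum_apply]
  rfl

theorem applyDer_C (c : F) : applyDer θ (C c) = 0 := by
  simp [applyDer]

theorem applyDer_X (j : Fin ℓ) : applyDer θ (X j) = θ j := by
  rw [applyDer_eq_mkDerivation, mkDerivation_X]

theorem applyDer_add : applyDer θ (f + g) = applyDer θ f + applyDer θ g := by
  simp only [applyDer_eq_mkDerivation, map_add]

theorem applyDer_mul : applyDer θ (f * g) = f * applyDer θ g + g * applyDer θ f := by
  simp only [applyDer_eq_mkDerivation, Derivation.leibniz, smul_eq_mul]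

theorem applyDer_linearForm (a : Fin ℓ → F) :
    applyDer θ (linearForm a) = ∑ j, C (a j) * θ j := by
  simp only [linearForm, applyDer_eq_mkDerivation, map_sum, ← smul_eq_C_mul, Derivation.map_smul,
    mkDerivation_X]

theorem sub_applyDer : applyDer (θ - η) f = applyDer θ f - applyDer η f := by
  simp only [applyDer, Pi.sub_apply, sub_mul, Finset.sum_sub_distrib]

theorem add_applyDer : applyDer (θ + η) f = applyDer θ f + applyDer η f := by
  simp only [applyDer, Pi.add_apply, add_mul, Finset.sum_add_distrib]

theorem smul_applyDer : applyDer (p • θ) f = p * applyDer θ f := by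
  simp only [applyDer, Pi.smul_apply, smul_eq_mul, mul_assoc, Finset.mul_sum]

theorem smul_X_applyDer {d : ℕ} (hf : f.IsHomogeneous d) :
    applyDer (p • X) f = p * (d * f) := by
  rw [smul_applyDer, applyDer, hf.sum_X_mul_pderiv, nsmul_eq_mul]

theorem isHomogeneous_applyDer {r d : ℕ} (hθ : ∀ j, (θ j).IsHomogeneous r)
    (hf : f.IsHomogeneous d) : (applyDer θ f).IsHomogeneous (r + (d - 1)) :=
  IsHomogeneous.sum _ _ _ fun j _ => (hθ j).mul hf.pderiv

theorem exists_isHomogeneous_applyDer_eq_zero [Nontrivial (Fin ℓ)] {d : ℕ}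
    (hf : f.IsHomogeneous d) : ∃ r, ∃ θ : Fin ℓ → MvPolynomial (Fin ℓ) F, θ ≠ 0 ∧
      (∀ j, (θ j).IsHomogeneous r) ∧ applyDer θ f = 0 := by
  obtain ⟨i, k, hik⟩ := exists_pair_ne (Fin ℓ)
  by_cases hi : pderiv i f = 0
  · refine ⟨0, Pi.single i 1, Pi.single_ne_zero_iff.mpr one_ne_zero, fun j => ?_, ?_⟩
    · rw [Pi.single_apply]
      split_ifs
      exacts [isHomogeneous_one _ _, isHomogeneous_zero _ _ _]
    · simp [applyDer, Pi.single_apply, hi]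
  · refine ⟨d - 1, Pi.single i (pderiv k f) - Pi.single k (pderiv i f), fun h => hi ?_,
      fun j => ?_, ?_⟩
    · simpa [hik] using congrFun h k
    · rw [Pi.sub_apply, Pi.single_apply, Pi.single_apply]
      refine IsHomogeneous.sub ?_ ?_ <;> split_ifs
      exacts [hf.pderiv, isHomogeneous_zero _ _ _, hf.pderiv, isHomogeneous_zero _ _ _]
    · rw [sub_applyDer, sub_eq_zero]
      simp [applyDer, Pi.single_apply, mul_comm]

theorem applyDer_hyperplaneRestriction {n : ℕ} {a : Fin (n + 1) → F} {i : Fin (n + 1)}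
    (ha : a i ≠ 0) {θ : Fin (n + 1) → MvPolynomial (Fin (n + 1)) F}
    (hθ : linearForm a ∣ applyDer θ (linearForm a)) (f : MvPolynomial (Fin (n + 1)) F) :
    applyDer (fun j => hyperplaneRestriction a i (θ (i.succAbove j)))
      (hyperplaneRestriction a i f) = hyperplaneRestriction a i (applyDer θ f) := by
  set ρ := hyperplaneRestriction a i with hρ
  have hρC (c : F) : ρ (C c) = C c := ρ.commutes c
  have hX (k : Fin (n + 1)) : applyDer (fun j => ρ (θ (i.succAbove j))) (ρ (X k)) = ρ (θ k) := by
    induction k using i.succAboveCases with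
    | p j => rw [hρ, hyperplaneRestriction_X_succAbove, applyDer_X]
    | x =>
      have hzero := (hyperplaneRestriction_eq_zero_iff ha).mpr hθ
      rw [applyDer_linearForm, map_sum, Fin.sum_univ_succAbove _ i] at hzero
      have hC : (C (a i)⁻¹ * C (a i) : MvPolynomial (Fin n) F) = 1 := by
        rw [← C_mul, inv_mul_cancel₀ ha, C_1]
      rw [hρ, hyperplaneRestriction_X_self, ← neg_mul, ← C_neg, applyDer_mul, applyDer_C,
        applyDer_linearForm, C_neg]
      simp only [map_mul, ← hρ, hρC] at hzero
      simp only [Fin.removeNth]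
      linear_combination -(C (a i)⁻¹) * hzero + ρ (θ i) * hC
  induction f using MvPolynomial.induction_on with
  | C c => simp only [hρC, applyDer_C, map_zero]
  | add f g hf hg => simp only [map_add, applyDer_add, hf, hg]
  | mul_X f k hf => simp only [map_mul, applyDer_mul, map_add, hf, hX, applyDer_X]

/-- Saito's determinant of the Euler derivation and `ψ`, in two variables. -/
theorem dvd_X_mul_sub_X_mul_of_dvd_applyDer {L : MvPolynomial (Fin 2) F} (hL0 : L ≠ 0)
    (hL : L.IsHomogeneous 1) {ψ : Fin 2 → MvPolynomial (Fin 2) F} (hψ : L ∣ applyDer ψ L) :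
    L ∣ X 0 * ψ 1 - X 1 * ψ 0 := by
  obtain ⟨b, rfl⟩ := exists_eq_linearForm hL
  obtain ⟨i, hi⟩ := exists_ne_zero_of_linearForm_ne_zero hL0
  have hb : IsUnit (C (b i) : MvPolynomial (Fin 2) F) := (isUnit_iff_ne_zero.mpr hi).map C
  obtain ⟨g, hg⟩ := hψ
  rw [applyDer_linearForm, Fin.sum_univ_two] at hg
  have hLb : linearForm b = C (b 0) * X 0 + C (b 1) * X 1 := Fin.sum_univ_two _
  rw [← hb.dvd_mul_left]
  fin_cases i
  · exact ⟨ψ 1 - X 1 * g, by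
      simp only [Fin.zero_eta]; linear_combination -ψ 1 * hLb - X 1 * hg⟩
  · exact ⟨X 0 * g - ψ 0, by
      simp only [Fin.mk_one]; linear_combination ψ 0 * hLb + X 0 * hg⟩

end Derivation

section Arrangement

variable {F : Type*} [Field F] {ℓ : ℕ} {A B : Finset (MvPolynomial (Fin ℓ) F)}
  {H L M : MvPolynomial (Fin ℓ) F} {θ η : Fin ℓ → MvPolynomial (Fin ℓ) F} {r : ℕ}

namespace IsArrangement

theorem ne_zero (hA : IsArrangement A) (hL : L ∈ A) : L ≠ 0 :=
  (hA.1 L hL).1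

theorem isHomogeneous (hA : IsArrangement A) (hL : L ∈ A) : L.IsHomogeneous 1 :=
  (hA.1 L hL).2

theorem mono (hA : IsArrangement A) (h : B ⊆ A) : IsArrangement B :=
  ⟨fun L hL => hA.1 L (h hL), fun L hL M hM => hA.2 L (h hL) M (h hM)⟩

theorem prime (hA : IsArrangement A) (hL : L ∈ A) : Prime L :=
  prime_of_isHomogeneous_one (hA.ne_zero hL) (hA.isHomogeneous hL)

theorem not_dvd (hA : IsArrangement A) (hL : L ∈ A) (hM : M ∈ A) (hne : L ≠ M) : ¬ L ∣ M := by
  intro h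
  obtain ⟨c, hc⟩ :=
    exists_eq_smul_of_dvd (hA.ne_zero hL) (hA.isHomogeneous hL) (hA.isHomogeneous hM) h
  exact hA.2 M hM L hL hne.symm c hc

theorem Qpoly_ne_zero (hA : IsArrangement A) : Qpoly A ≠ 0 :=
  Finset.prod_ne_zero_iff.mpr fun _ => hA.ne_zero

theorem isHomogeneous_Qpoly (hA : IsArrangement A) : (Qpoly A).IsHomogeneous A.card := by
  simpa [Qpoly] using IsHomogeneous.prod A id (fun _ => 1) fun _ => hA.isHomogeneous

end IsArrangement

/-- The derivation `∑ j, θ j ∂_j` belongs to the module `D(A)` of logarithmic derivations: it maps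
each defining form into the ideal generated by that form. -/
def IsLogarithmic (A : Finset (MvPolynomial (Fin ℓ) F)) (θ : Fin ℓ → MvPolynomial (Fin ℓ) F) :
    Prop :=
  ∀ L ∈ A, L ∣ applyDer θ L

theorem IsLogarithmic.Qpoly_dvd (hθ : IsLogarithmic A θ) : Qpoly A ∣ applyDer θ (Qpoly A) := by
  induction A using Finset.induction_on with
  | empty => simp [Qpoly]
  | insert L A hL ih =>
    have hQ : Qpoly (insert L A) = L * Qpoly A := Finset.prod_insert hL
    rw [hQ, applyDer_mul]
    refine dvd_add (mul_dvd_mul_left L (ih fun M hM => hθ M (Finset.mem_insert_of_mem hM))) ?_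
    rw [mul_comm L]
    exact mul_dvd_mul_left _ (hθ L (Finset.mem_insert_self L A))

theorem IsArrangement.isLogarithmic_of_Qpoly_dvd (hA : IsArrangement A)
    (hθ : Qpoly A ∣ applyDer θ (Qpoly A)) : IsLogarithmic A θ := by
  intro L hL
  have hQ : Qpoly A = L * Qpoly (A.erase L) := (Finset.mul_prod_erase A id hL).symm
  have hndvd : ¬ L ∣ Qpoly (A.erase L) := by
    rw [Qpoly, (hA.prime hL).dvd_finsetProd_iff]
    rintro ⟨M, hM, hLM⟩
    exact hA.not_dvd hL (Finset.mem_of_mem_erase hM) (Finset.ne_of_mem_erase hM).symm hLM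
  have hdvd : L ∣ L * applyDer θ (Qpoly (A.erase L)) + Qpoly (A.erase L) * applyDer θ L := by
    rw [← applyDer_mul, ← hQ]
    exact (Dvd.intro _ hQ.symm).trans hθ
  exact ((hA.prime hL).dvd_or_dvd ((dvd_add_right (dvd_mul_right _ _)).mp hdvd)).resolve_left hndvd

theorem mdr_le (hθ0 : θ ≠ 0) (hθ : ∀ j, (θ j).IsHomogeneous r)
    (hQ : applyDer θ (Qpoly A) = 0) : mdr A ≤ r :=
  Nat.sInf_le ⟨θ, hθ0, hθ, hQ⟩

namespace IsArrangement

/-- Subtracting a multiple of the Euler derivation makes a logarithmic derivation annihilate the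
defining polynomial. -/
theorem mdr_le_of_isLogarithmic [CharZero F] (hA : IsArrangement A) (hne : A.Nonempty)
    (hη : ∀ j, (η j).IsHomogeneous r) (hlog : IsLogarithmic A η)
    (hEuler : ∀ p : MvPolynomial (Fin ℓ) F, η ≠ p • X) : mdr A ≤ r := by
  obtain ⟨q, hq⟩ := hlog.Qpoly_dvd
  let p : MvPolynomial (Fin ℓ) F := C (A.card : F)⁻¹ * q
  have hcard : C (A.card : F)⁻¹ * (A.card : MvPolynomial (Fin ℓ) F) = 1 := by
    rw [← map_natCast C, ← C_mul, inv_mul_cancel₀ (Nat.cast_ne_zero.mpr hne.card_ne_zero), C_1]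
  have hp (j : Fin ℓ) : (p * X j).IsHomogeneous r := by
    have hmul : Qpoly A * (p * X j) = C (A.card : F)⁻¹ * (applyDer η (Qpoly A) * X j) := by
      rw [hq]
      ring
    refine isHomogeneous_of_mul hA.Qpoly_ne_zero hA.isHomogeneous_Qpoly ?_
    rw [hmul]
    convert ((isHomogeneous_applyDer hη hA.isHomogeneous_Qpoly).mul (isHomogeneous_X F j)).C_mul _
      using 1
    have := hne.card_pos
    omega
  refine mdr_le (sub_ne_zero.mpr (hEuler p)) (fun j => (hη j).sub (hp j)) ?_
  rw [sub_applyDer, smul_X_applyDer hA.isHomogeneous_Qpoly, hq]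
  linear_combination -(q * Qpoly A) * hcard

variable [Nontrivial (Fin ℓ)]

theorem exists_isHomogeneous_mdr (hA : IsArrangement A) :
    ∃ θ : Fin ℓ → MvPolynomial (Fin ℓ) F, θ ≠ 0 ∧ (∀ j, (θ j).IsHomogeneous (mdr A)) ∧
      applyDer θ (Qpoly A) = 0 :=
  Nat.sInf_mem (exists_isHomogeneous_applyDer_eq_zero hA.isHomogeneous_Qpoly)

theorem mdr_pos (hA : IsArrangement A) (hess : IsEssential A) : 0 < mdr A := by
  obtain ⟨θ, hθ0, hθ, hθQ⟩ := hA.exists_isHomogeneous_mdr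
  have hlog := hA.isLogarithmic_of_Qpoly_dvd (hθQ ▸ dvd_zero _)
  refine Nat.pos_of_ne_zero fun hmdr => hθ0 ?_
  choose v hv using fun j => exists_eq_C_of_isHomogeneous_zero (hmdr ▸ hθ j)
  suffices v = 0 by ext1 j; simp [hv, this]
  refine hess v fun L hL => ?_
  obtain ⟨a, rfl⟩ := exists_eq_linearForm (hA.isHomogeneous hL)
  have hdvd := hlog _ hL
  have hval : applyDer θ (linearForm a) = C (eval v (linearForm a)) := by
    rw [applyDer_linearForm]
    simp [hv, linearForm]
  rw [hval] at hdvd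
  by_contra hne
  exact (hA.prime hL).not_isUnit (isUnit_of_dvd_unit hdvd ((isUnit_iff_ne_zero.mpr hne).map C))

variable [CharZero F]

theorem exists_isLogarithmic_mdr (hA : IsArrangement A) (hne : A.Nonempty) :
    ∃ θ : Fin ℓ → MvPolynomial (Fin ℓ) F, (∀ j, (θ j).IsHomogeneous (mdr A)) ∧
      IsLogarithmic A θ ∧ ∀ p : MvPolynomial (Fin ℓ) F, θ ≠ p • X := by
  obtain ⟨θ, hθ0, hθ, hθQ⟩ := hA.exists_isHomogeneous_mdr
  refine ⟨θ, hθ, hA.isLogarithmic_of_Qpoly_dvd (hθQ ▸ dvd_zero _), ?_⟩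
  rintro p rfl
  rw [smul_X_applyDer hA.isHomogeneous_Qpoly] at hθQ
  have hcard : (A.card : MvPolynomial (Fin ℓ) F) ≠ 0 := Nat.cast_ne_zero.mpr hne.card_ne_zero
  have hp : p = 0 :=
    (mul_eq_zero.mp hθQ).resolve_right (mul_ne_zero hcard hA.Qpoly_ne_zero)
  exact hθ0 (by rw [hp, zero_smul])

theorem mdr_insert_le (hA : IsArrangement (insert H A)) (hne : A.Nonempty) :
    mdr (insert H A) ≤ mdr A + 1 := by
  obtain ⟨θ, hθ, hlog, hEuler⟩ :=
    (hA.mono (Finset.subset_insert H A)).exists_isLogarithmic_mdr hne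
  have hH : H ∈ insert H A := Finset.mem_insert_self H A
  refine hA.mdr_le_of_isLogarithmic (Finset.insert_nonempty H A) (η := H • θ)
    (fun j => add_comm 1 (mdr A) ▸ (hA.isHomogeneous hH).mul (hθ j)) (fun L hL => ?_) ?_
  · rw [smul_applyDer]
    rcases Finset.mem_insert.mp hL with rfl | hLA
    exacts [dvd_mul_right _ _, (hlog L hLA).mul_left H]
  · intro p hp
    obtain ⟨q, hq⟩ := exists_eq_smul_X_of_smul_eq (hA.ne_zero hH) hp
    exact hEuler q hq

end IsArrangement

end Arrangement

section Restriction

variable {F : Type*} [Field F]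

theorem setOf_eval_eq_of_dvd_sub_smul {σ : Type*} {H L M : MvPolynomial σ F} {c : F} (hc : c ≠ 0)
    (h : H ∣ M - c • L) :
    {v | eval v H = 0 ∧ eval v M = 0} = {v | eval v H = 0 ∧ eval v L = 0} := by
  obtain ⟨g, hg⟩ := h
  ext v
  refine and_congr_right fun hv => ?_
  have hM : eval v M = c * eval v L := by
    simpa [hv, sub_eq_zero, smul_eq_C_mul] using congrArg (eval v) hg
  rw [hM, mul_eq_zero, or_iff_right hc]

variable {n : ℕ} {a : Fin (n + 1) → F} {i : Fin (n + 1)}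
  {A : Finset (MvPolynomial (Fin (n + 1)) F)} {L M : MvPolynomial (Fin (n + 1)) F}

theorem isRelPrime_hyperplaneRestriction (ha : a i ≠ 0) (hL : L.IsHomogeneous 1)
    (hM : M.IsHomogeneous 1) (hLa : ¬ linearForm a ∣ L) (hMa : ¬ linearForm a ∣ M)
    (hne : {v | eval v (linearForm a) = 0 ∧ eval v L = 0} ≠
      {v | eval v (linearForm a) = 0 ∧ eval v M = 0}) :
    IsRelPrime (hyperplaneRestriction a i L) (hyperplaneRestriction a i M) := by
  rw [← hyperplaneRestriction_eq_zero_iff ha] at hLa hMa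
  have hirr := (prime_of_isHomogeneous_one hLa (isHomogeneous_hyperplaneRestriction hL)).irreducible
  refine hirr.isRelPrime_iff_not_dvd.mpr fun hdvd => ?_
  obtain ⟨c, hc⟩ := exists_eq_smul_of_dvd hLa (isHomogeneous_hyperplaneRestriction hL)
    (isHomogeneous_hyperplaneRestriction hM) hdvd
  have hc0 : c ≠ 0 := fun h0 => hMa (by rw [hc, h0, zero_smul])
  refine hne (setOf_eval_eq_of_dvd_sub_smul hc0 ?_).symm
  rw [← hyperplaneRestriction_eq_zero_iff ha, map_sub, map_smul, hc, sub_self]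

theorem IsArrangement.restCard_le_of_dvd (hA : IsArrangement A) (ha : a i ≠ 0)
    (haA : linearForm a ∈ A) {P : MvPolynomial (Fin n) F} {d : ℕ} (hP0 : P ≠ 0)
    (hP : P.IsHomogeneous d)
    (hdvd : ∀ L ∈ A.erase (linearForm a), hyperplaneRestriction a i L ∣ P) :
    restCard A (linearForm a) ≤ d := by
  obtain ⟨B, hB, hinj, himage⟩ := Finset.exists_subset_injOn_image_eq_of_surjOn
    (f := fun L => {v : Fin (n + 1) → F | eval v (linearForm a) = 0 ∧ eval v L = 0})
    (A.erase (linearForm a)) ((A.erase (linearForm a)).image _)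
    (by rw [Finset.coe_image]; exact Set.surjOn_image _ _)
  rw [restCard, ← himage, Finset.card_image_of_injOn hinj]
  have hBA : ∀ L ∈ B, L ∈ A ∧ ¬ linearForm a ∣ L := fun L hL =>
    have hL' := Finset.mem_erase.mp (hB hL)
    ⟨hL'.2, hA.not_dvd haA hL'.2 hL'.1.symm⟩
  refine card_le_of_pairwise_isRelPrime_of_dvd
    (fun L hL => isHomogeneous_hyperplaneRestriction (hA.isHomogeneous (hBA L hL).1))
    (fun L hL M hM hLM => ?_) (fun L hL => hdvd L (hB hL)) hP0 hP
  exact isRelPrime_hyperplaneRestriction ha (hA.isHomogeneous (hBA L hL).1)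
    (hA.isHomogeneous (hBA M hM).1) (hBA L hL).2 (hBA M hM).2 fun h => hLM (hinj hL hM h)

end Restriction

section Lines

variable {F : Type*} [Field F] {A : Finset (MvPolynomial (Fin 3) F)} {H : MvPolynomial (Fin 3) F}
  {θ : Fin 3 → MvPolynomial (Fin 3) F} {s : ℕ}

theorem IsArrangement.exists_hyperplaneRestriction_eq_smul_X (hA : IsArrangement A)
    {a : Fin 3 → F} {i : Fin 3} (ha : a i ≠ 0) (haA : linearForm a ∈ A)
    (hθ : ∀ j, (θ j).IsHomogeneous (s + 1)) (hlog : IsLogarithmic A θ)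
    (hcard : s + 3 ≤ restCard A (linearForm a)) :
    ∃ p : MvPolynomial (Fin 2) F,
      (fun j => hyperplaneRestriction a i (θ (i.succAbove j))) = p • X := by
  set ψ : Fin 2 → MvPolynomial (Fin 2) F :=
    fun j => hyperplaneRestriction a i (θ (i.succAbove j))
  have hψ (j : Fin 2) : (ψ j).IsHomogeneous (s + 1) := isHomogeneous_hyperplaneRestriction (hθ _)
  have hdet : X 0 * ψ 1 - X 1 * ψ 0 = 0 := by
    by_contra hne
    have hdeg : (X 0 * ψ 1 - X 1 * ψ 0).IsHomogeneous (1 + (s + 1)) :=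
      ((isHomogeneous_X F 0).mul (hψ 1)).sub ((isHomogeneous_X F 1).mul (hψ 0))
    have hle := hA.restCard_le_of_dvd ha haA hne hdeg fun L hL => by
      obtain ⟨hLH, hLA⟩ := Finset.mem_erase.mp hL
      refine dvd_X_mul_sub_X_mul_of_dvd_applyDer ?_
        (isHomogeneous_hyperplaneRestriction (hA.isHomogeneous hLA)) ?_
      · rw [Ne, hyperplaneRestriction_eq_zero_iff ha]
        exact hA.not_dvd haA hLA hLH.symm
      · rw [applyDer_hyperplaneRestriction ha (hlog _ haA)]
        exact map_dvd _ (hlog L hLA)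
    omega
  refine exists_eq_smul_X_of_X_mul_eq fun j k => ?_
  fin_cases j <;> fin_cases k <;> simp only [Fin.zero_eta, Fin.mk_one] <;> grind

theorem IsArrangement.exists_eq_smul_X_add_smul (hA : IsArrangement A) (hH : H ∈ A)
    (hθ : ∀ j, (θ j).IsHomogeneous (s + 1)) (hlog : IsLogarithmic A θ)
    (hcard : s + 3 ≤ restCard A H) :
    ∃ (p : MvPolynomial (Fin 3) F) (η : Fin 3 → MvPolynomial (Fin 3) F),
      (∀ j, (η j).IsHomogeneous s) ∧ θ = p • X + H • η := by
  obtain ⟨a, rfl⟩ := exists_eq_linearForm (hA.isHomogeneous hH)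
  obtain ⟨i, ha⟩ := exists_ne_zero_of_linearForm_ne_zero (hA.ne_zero hH)
  obtain ⟨q, hq⟩ := hA.exists_hyperplaneRestriction_eq_smul_X ha hH hθ hlog hcard
  have hqs : q.IsHomogeneous s := by
    refine isHomogeneous_of_mul (X_ne_zero (0 : Fin 2)) (isHomogeneous_X F 0) ?_
    rw [mul_comm, add_comm 1 s]
    change ((q • X : Fin 2 → MvPolynomial (Fin 2) F) 0).IsHomogeneous (s + 1)
    exact hq ▸ isHomogeneous_hyperplaneRestriction (hθ _)
  let p : MvPolynomial (Fin 3) F := rename i.succAbove q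
  have hdvd (k : Fin 3) : linearForm a ∣ θ k - p * X k := by
    rw [← hyperplaneRestriction_eq_zero_iff ha, map_sub, map_mul, hyperplaneRestriction_rename,
      ← applyDer_X (θ := θ) k, ← applyDer_hyperplaneRestriction ha (hlog _ hH), hq,
      smul_X_applyDer (isHomogeneous_hyperplaneRestriction (isHomogeneous_X F k)), Nat.cast_one,
      one_mul, sub_self]
  choose η hη using hdvd
  refine ⟨p, η, fun k => isHomogeneous_of_mul (hA.ne_zero hH) (hA.isHomogeneous hH) ?_, ?_⟩
  · rw [← hη, add_comm 1 s]
    exact (hθ k).sub ((hqs.rename_isHomogeneous).mul (isHomogeneous_X F k))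
  · ext1 k
    simp [← hη]

theorem IsArrangement.mdr_erase_lt [CharZero F] (hA : IsArrangement A) (hess : IsEssential A)
    (hH : H ∈ A) (hne : (A.erase H).Nonempty) (hcard : mdr A + 2 ≤ restCard A H) :
    mdr (A.erase H) < mdr A := by
  obtain ⟨s, hs⟩ := Nat.exists_eq_add_one.mpr (hA.mdr_pos hess)
  obtain ⟨θ, hθ, hlog, hEuler⟩ := hA.exists_isLogarithmic_mdr ⟨H, hH⟩
  rw [hs] at hθ hcard ⊢
  obtain ⟨p, η, hη, rfl⟩ := hA.exists_eq_smul_X_add_smul hH hθ hlog hcard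
  refine Nat.lt_succ_of_le ((hA.mono (Finset.erase_subset H A)).mdr_le_of_isLogarithmic hne hη
    (fun L hL => ?_) ?_)
  · obtain ⟨hLH, hLA⟩ := Finset.mem_erase.mp hL
    have hdvd := hlog L hLA
    rw [add_applyDer, smul_X_applyDer (hA.isHomogeneous hLA), smul_applyDer,
      Nat.cast_one, one_mul, dvd_add_right (dvd_mul_left L p)] at hdvd
    exact ((hA.prime hLA).dvd_or_dvd hdvd).resolve_left (hA.not_dvd hLA hH hLH)
  · rintro q rfl
    refine hEuler (p + H * q) ?_
    rw [add_smul, mul_smul]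

end Lines

/-- Addition theorem for `r(A)` for line arrangements:
Let `A'` be a line arrangement in `P^2` and let `H` be a line not in `A'`, with
`A = A' ∪ {H}` essential. Set `r' = r(A')`. If the number of intersection points of
`A` lying on `H` is at least `r' + 2`, then `r(A) = r' + 1`. -/
theorem mdr_addition_lines (A' : Finset (MvPolynomial (Fin 3) K))
    (H : MvPolynomial (Fin 3) K) (hH : H ∉ A')
    (hA' : IsArrangement A') (hA : IsArrangement (insert H A'))
    (hAess : IsEssential (insert H A'))
    (h : mdr A' + 2 ≤ restCard (insert H A') H) :
    mdr (insert H A') = mdr A' + 1 := by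
  have hne : A'.Nonempty := by
    rw [Finset.nonempty_iff_ne_empty]
    rintro rfl
    simp [restCard] at h
  refine le_antisymm (hA.mdr_insert_le hne) ?_
  by_contra! hlt
  have hlower := hA.mdr_erase_lt hAess (Finset.mem_insert_self H A')
    ((Finset.erase_insert hH).symm ▸ hne) (by omega)
  rw [Finset.erase_insert hH] at hlower
  omega
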